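/- Let φ be an N-function with Fenchel conjugate φ* such that the map ψ(t) := (φ*)'(t)/t is non-increasing on (0,∞). Then for all s, t > 0 one has the scalar inequality (1/2)·ψ(t)·t² − φ*(t) ≤ (1/2)·ψ(t)·s² − φ*(s); equivalently, s = t minimizes s ↦ (1/2)ψ(t)s² − φ*(s) over s > 0. -/

import Mathlib

open Filter MeasureTheory Set Topology

noncomputable section

/-- `φ : [0,∞) → [0,∞)` is an N-function with right-continuous non-decreasing
derivative `φ'`. -/
structure IsNFunction (φ φ' : ℝ → ℝ) : Prop where
  continuousOn : ContinuousOn φ (Set.Ici 0)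
  convexOn : ConvexOn ℝ (Set.Ici 0) φ
  deriv_nonneg : ∀ t : ℝ, 0 ≤ t → 0 ≤ φ' t
  deriv_monotoneOn : MonotoneOn φ' (Set.Ici 0)
  deriv_rightContinuous : ∀ t : ℝ, 0 ≤ t →
    Filter.Tendsto φ' (nhdsWithin t (Set.Ioi t)) (nhds (φ' t))
  deriv_zero : φ' 0 = 0
  deriv_pos : ∀ t : ℝ, 0 < t → 0 < φ' t
  deriv_tendsto_atTop : Filter.Tendsto φ' Filter.atTop Filter.atTop
  eq_integral : ∀ t : ℝ, 0 ≤ t → φ t = ∫ s in (0:ℝ)..t, φ' s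

/-- Fenchel conjugate `φ*(r) = sup_{s ≥ 0} (r s − φ(s))`. -/
def fenchelConj (φ : ℝ → ℝ) (r : ℝ) : ℝ :=
  sSup {x : ℝ | ∃ s : ℝ, 0 ≤ s ∧ x = r * s - φ s}

/-- Right-continuous inverse `(φ')⁻¹(t) = sup {r ≥ 0 : φ'(r) ≤ t}`. -/
def rcInv (φ' : ℝ → ℝ) (t : ℝ) : ℝ :=
  sSup {r : ℝ | 0 ≤ r ∧ φ' r ≤ t}

theorem nf_int {φ φ' : ℝ → ℝ} (hφ : IsNFunction φ φ') {a b : ℝ} (ha : 0 ≤ a) (hb : 0 ≤ b) :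
    IntervalIntegrable φ' volume a b := by
  apply MonotoneOn.intervalIntegrable
  apply hφ.deriv_monotoneOn.mono
  intro x hx
  exact le_trans (le_inf ha hb) hx.1

theorem nf_sub {φ φ' : ℝ → ℝ} (hφ : IsNFunction φ φ') {a b : ℝ} (ha : 0 ≤ a) (hb : 0 ≤ b) :
    φ b - φ a = ∫ x in a..b, φ' x := by
  rw [hφ.eq_integral b hb, hφ.eq_integral a ha]
  exact intervalIntegral.integral_interval_sub_left (nf_int hφ le_rfl hb) (nf_int hφ le_rfl ha)

theorem nf_bdd {φ φ' : ℝ → ℝ} (hφ : IsNFunction φ φ') (t : ℝ) :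
    BddAbove {r : ℝ | 0 ≤ r ∧ φ' r ≤ t} := by
  obtain ⟨M, hM⟩ := (hφ.deriv_tendsto_atTop.eventually_gt_atTop t).exists_forall_of_atTop
  refine ⟨M, ?_⟩
  rintro r ⟨_, h⟩
  by_contra hc
  exact absurd (hM r (not_le.mp hc).le) (not_lt.mpr h)

theorem nf_g_nonneg {φ φ' : ℝ → ℝ} (hφ : IsNFunction φ φ') {t : ℝ} (ht : 0 < t) :
    0 ≤ rcInv φ' t :=
  le_csSup (nf_bdd hφ t) ⟨le_rfl, by rw [hφ.deriv_zero]; exact ht.le⟩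

theorem nf_lt {φ φ' : ℝ → ℝ} (hφ : IsNFunction φ φ') {t x : ℝ} (ht : 0 < t) (hx : 0 ≤ x)
    (h : x < rcInv φ' t) : φ' x ≤ t := by
  have hne : {r : ℝ | 0 ≤ r ∧ φ' r ≤ t}.Nonempty :=
    ⟨0, le_rfl, by rw [hφ.deriv_zero]; exact ht.le⟩
  obtain ⟨y, ⟨hy0, hy⟩, hxy⟩ := exists_lt_of_lt_csSup hne h
  exact (hφ.deriv_monotoneOn hx hy0 hxy.le).trans hy

theorem nf_gt {φ φ' : ℝ → ℝ} (hφ : IsNFunction φ φ') {t x : ℝ} (hx : 0 ≤ x)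
    (h : rcInv φ' t < x) : t ≤ φ' x := by
  by_contra hc
  exact absurd (le_csSup (nf_bdd hφ t) ⟨hx, (not_le.mp hc).le⟩) (not_le.mpr h)

theorem nf_max {φ φ' : ℝ → ℝ} (hφ : IsNFunction φ φ') {t s : ℝ} (ht : 0 < t) (hs : 0 ≤ s) :
    t * s - φ s ≤ t * rcInv φ' t - φ (rcInv φ' t) := by
  have hg := nf_g_nonneg hφ ht
  rcases le_total s (rcInv φ' t) with h | h
  · have h1 := nf_sub hφ hs hg
    have h2 : ∫ x in s..(rcInv φ' t), φ' x ≤ ∫ x in s..(rcInv φ' t), t := by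
      apply intervalIntegral.integral_mono_on_of_le_Ioo h (nf_int hφ hs hg) (by simp)
      intro x hx
      exact nf_lt hφ ht (hs.trans hx.1.le) hx.2
    simp only [intervalIntegral.integral_const, smul_eq_mul] at h2
    linarith
  · have h1 := nf_sub hφ hg hs
    have h2 : ∫ x in (rcInv φ' t)..s, t ≤ ∫ x in (rcInv φ' t)..s, φ' x := by
      apply intervalIntegral.integral_mono_on_of_le_Ioo h (by simp) (nf_int hφ hg hs)
      intro x hx
      exact nf_gt hφ (hg.trans hx.1.le) hx.1
    simp only [intervalIntegral.integral_const, smul_eq_mul] at h2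
    linarith

theorem nf_conj {φ φ' : ℝ → ℝ} (hφ : IsNFunction φ φ') {t : ℝ} (ht : 0 < t) :
    fenchelConj φ t = t * rcInv φ' t - φ (rcInv φ' t) := by
  apply IsGreatest.csSup_eq
  refine ⟨⟨_, nf_g_nonneg hφ ht, rfl⟩, ?_⟩
  rintro x ⟨s, hs, rfl⟩
  exact nf_max hφ ht hs

theorem nf_subgrad {φ φ' : ℝ → ℝ} (hφ : IsNFunction φ φ') {t s : ℝ} (ht : 0 < t) (hs : 0 < s) :
    (s - t) * rcInv φ' t ≤ fenchelConj φ s - fenchelConj φ t := by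
  rw [nf_conj hφ ht, nf_conj hφ hs]
  have := nf_max hφ hs (nf_g_nonneg hφ ht)
  linarith

theorem nf_deriv {φ φ' : ℝ → ℝ} (hφ : IsNFunction φ φ')
    (hmono : ∀ t T : ℝ, 0 < t → t ≤ T → rcInv φ' T / T ≤ rcInv φ' t / t) {t : ℝ} (ht : 0 < t) :
    HasDerivAt (fenchelConj φ) (rcInv φ' t) t := by
  -- increments are controlled quadratically near t
  have key : ∀ s, 0 < s → |(fenchelConj φ s - fenchelConj φ t) - (s - t) * rcInv φ' t|
      ≤ rcInv φ' t / t * (s - t) ^ 2 := by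
    intro s hs
    have h1 := nf_subgrad hφ ht hs
    have h2 := nf_subgrad hφ hs ht
    rw [abs_of_nonneg (by linarith)]
    set g := rcInv φ' t
    set G := rcInv φ' s
    have e1 : g = g / t * t := by field_simp
    have e2 : G = G / s * s := by field_simp
    have h3 : (s - t) * (G - g / t * s) ≤ 0 := by
      rcases le_total t s with h | h
      · have h4 : G / s ≤ g / t := hmono t s ht h
        have : G ≤ g / t * s := by rw [e2]; gcongr
        nlinarith
      · have h4 : g / t ≤ G / s := hmono s t hs h
        have : g / t * s ≤ G := by rw [e2]; gcongr
        nlinarith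
    have e3 : (s - t) * g = (s - t) * (g / t * t) := by rw [← e1]
    nlinarith
  rw [hasDerivAt_iff_isLittleO]
  have hO : (fun s => fenchelConj φ s - fenchelConj φ t - (s - t) • rcInv φ' t) =O[𝓝 t]
      (fun s => (s - t) ^ 2) := by
    apply Asymptotics.IsBigO.of_bound (rcInv φ' t / t)
    filter_upwards [lt_mem_nhds ht] with s hs
    have := key s hs
    rw [Real.norm_eq_abs, Real.norm_eq_abs, abs_of_nonneg (sq_nonneg (s - t))]
    simpa using this
  refine hO.trans_isLittleO ?_
  have h2 := Asymptotics.isLittleO_pow_sub_sub t (m := 2) (by norm_num)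
  simpa using h2

/-- if `ψ(t) = (φ*)'(t)/t` is non-increasing on `(0,∞)`, then for
all `s, t > 0` one has `(1/2)ψ(t)t² − φ*(t) ≤ (1/2)ψ(t)s² − φ*(s)`. -/
theorem quadratic_relaxation_scalar (φ φ' : ℝ → ℝ) (hφ : IsNFunction φ φ')
    (hmono : ∀ t T : ℝ, 0 < t → t ≤ T → rcInv φ' T / T ≤ rcInv φ' t / t) :
    ∀ s t : ℝ, 0 < s → 0 < t →
      (1/2) * (rcInv φ' t / t) * t ^ 2 - fenchelConj φ t ≤
      (1/2) * (rcInv φ' t / t) * s ^ 2 - fenchelConj φ s := by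
  intro s t hs ht
  set c := rcInv φ' t / t with hc
  have hd : ∀ x, 0 < x → HasDerivAt (fun x => (1/2) * c * x ^ 2 - fenchelConj φ x)
      (c * x - rcInv φ' x) x := by
    intro x hx
    have h := ((hasDerivAt_pow 2 x).const_mul ((1/2) * c)).sub (nf_deriv hφ hmono hx)
    refine h.congr_deriv ?_
    push_cast
    ring
  have hpos : ∀ x, 0 < x → rcInv φ' x = rcInv φ' x / x * x := by
    intro x hx
    field_simp
  rcases le_total t s with h | h
  · have hm : MonotoneOn (fun x => (1/2) * c * x ^ 2 - fenchelConj φ x) (Icc t s) := by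
      apply monotoneOn_of_deriv_nonneg (convex_Icc t s)
      · intro x hx
        exact (hd x (ht.trans_le hx.1)).continuousAt.continuousWithinAt
      · intro x hx
        rw [interior_Icc] at hx
        exact (hd x (ht.trans hx.1)).differentiableAt.differentiableWithinAt
      · intro x hx
        rw [interior_Icc] at hx
        have hx0 := ht.trans hx.1
        rw [(hd x hx0).deriv, hpos x hx0]
        have := mul_le_mul_of_nonneg_right (hmono t x ht hx.1.le) hx0.le
        linarith
    exact hm (left_mem_Icc.mpr h) (right_mem_Icc.mpr h) h
  · have hm : AntitoneOn (fun x => (1/2) * c * x ^ 2 - fenchelConj φ x) (Icc s t) := by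
      apply antitoneOn_of_deriv_nonpos (convex_Icc s t)
      · intro x hx
        exact (hd x (hs.trans_le hx.1)).continuousAt.continuousWithinAt
      · intro x hx
        rw [interior_Icc] at hx
        exact (hd x (hs.trans hx.1)).differentiableAt.differentiableWithinAt
      · intro x hx
        rw [interior_Icc] at hx
        have hx0 := hs.trans hx.1
        rw [(hd x hx0).deriv, hpos x hx0]
        have := mul_le_mul_of_nonneg_right (hmono x t hx0 hx.2.le) hx0.le
        linarith
    exact hm (left_mem_Icc.mpr h) (right_mem_Icc.mpr h) h
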